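/- Let λ > λ' > 0 and ξ > 0 be real numbers, and define L₁ = λ² + λ'² − 2λξ − 2λ'ξ + 4ξ² and L₂ = λ²λ'² − 2λ²λ'ξ − 2λλ'²ξ + (λ + λ')²ξ². If ξ > 2(λ + λ')λ'/(λ + 3λ'), then λ'⁴ > L₁λ'² − L₂. -/

import Mathlib

/-!
`λ'⁴ - L₁λ'² + L₂` is the characteristic polynomial of `ΨᵀΨ` at `λ'²`. Since `Ψ` is symmetric,
`λ'² - ΨᵀΨ = (λ' + Ψ)(λ' - Ψ)`, and the two factors have determinants
`2(λ + λ')λ' - ξ(λ + 3λ')` and `-ξ(λ - λ')`. The second is negative because `λ' < λ`, and the bound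
on `ξ` says exactly that the first is negative too.
-/

open Matrix

section CharpolyEval

variable {n R : Type*} [Fintype n] [DecidableEq n] [CommRing R]

theorem eval_sq_charpoly_sq (M : Matrix n n R) (μ : R) :
    (M ^ 2).charpoly.eval (μ ^ 2) = (-M).charpoly.eval μ * M.charpoly.eval μ := by
  have comm : Commute (scalar n μ) M := scalar_commute μ (Commute.all μ) M
  rw [eval_charpoly, eval_charpoly, eval_charpoly, ← det_mul, map_pow, comm.sq_sub_sq,
    sub_neg_eq_add]

theorem eval_charpoly_fin_two (M : Matrix (Fin 2) (Fin 2) R) (μ : R) :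
    M.charpoly.eval μ = μ ^ 2 - M.trace * μ + M.det := by
  nontriviality R
  simp [charpoly_fin_two]

end CharpolyEval

section Psi

variable {R : Type*} [CommRing R] (a b ξ : R)

/-- The matrix `Ψ` of Appendix B, with `a` and `b` in the roles of `λ = λ_{N-2}` and
`λ' = λ_{N-1}`; `L₁` and `L₂` are the trace and determinant of `ΨᵀΨ`. -/
def psi : Matrix (Fin 2) (Fin 2) R :=
  !![a - ξ, -ξ; -ξ, b - ξ]

theorem isSymm_psi : (psi a b ξ).IsSymm := by
  ext i j
  fin_cases i <;> fin_cases j <;> rfl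

theorem trace_psi : (psi a b ξ).trace = a + b - 2 * ξ := by
  rw [psi, trace_fin_two_of]
  ring

theorem det_psi : (psi a b ξ).det = a * b - (a + b) * ξ := by
  rw [psi, det_fin_two_of]
  ring

theorem trace_psi_transpose_mul_psi :
    ((psi a b ξ)ᵀ * psi a b ξ).trace =
      a ^ 2 + b ^ 2 - 2 * a * ξ - 2 * b * ξ + 4 * ξ ^ 2 := by
  rw [(isSymm_psi a b ξ).eq, psi, mul_fin_two, trace_fin_two_of]
  ring

theorem det_psi_transpose_mul_psi :
    ((psi a b ξ)ᵀ * psi a b ξ).det =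
      a ^ 2 * b ^ 2 - 2 * a ^ 2 * b * ξ - 2 * a * b ^ 2 * ξ + (a + b) ^ 2 * ξ ^ 2 := by
  rw [det_mul, det_transpose, det_psi]
  ring

theorem eval_charpoly_psi_right : (psi a b ξ).charpoly.eval b = -(ξ * (a - b)) := by
  rw [eval_charpoly_fin_two, trace_psi, det_psi]
  ring

theorem eval_charpoly_neg_psi_right :
    (-psi a b ξ).charpoly.eval b = 2 * (a + b) * b - ξ * (a + 3 * b) := by
  rw [eval_charpoly_fin_two, trace_neg, det_neg, trace_psi, det_psi, Fintype.card_fin]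
  ring

variable {a b ξ} [LinearOrder R] [IsStrictOrderedRing R]

theorem eval_sq_charpoly_psi_transpose_mul_psi_pos (hab : b < a) (hξ : 0 < ξ)
    (hbound : 2 * (a + b) * b < ξ * (a + 3 * b)) :
    0 < ((psi a b ξ)ᵀ * psi a b ξ).charpoly.eval (b ^ 2) := by
  rw [(isSymm_psi a b ξ).eq, ← sq, eval_sq_charpoly_sq, eval_charpoly_neg_psi_right,
    eval_charpoly_psi_right]
  exact mul_pos_of_neg_of_neg (sub_neg.2 hbound) (neg_neg_of_pos (mul_pos hξ (sub_pos.2 hab)))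

end Psi

/-- Key step of Appendix B for `σ₁ > λ'`: if `ξ > 2(λ + λ')λ'/(λ + 3λ')`, then
`λ'⁴ > L₁λ'² - L₂`. -/
theorem appendixB_key_step_sigma1
    (lam lam' ξ : ℝ) (h1 : lam' < lam) (h2 : 0 < lam') (h3 : 0 < ξ)
    (L1 L2 : ℝ)
    (hL1 : L1 = lam ^ 2 + lam' ^ 2 - 2 * lam * ξ - 2 * lam' * ξ + 4 * ξ ^ 2)
    (hL2 : L2 = lam ^ 2 * lam' ^ 2 - 2 * lam ^ 2 * lam' * ξ - 2 * lam * lam' ^ 2 * ξ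
        + (lam + lam') ^ 2 * ξ ^ 2)
    (hξ : 2 * (lam + lam') * lam' / (lam + 3 * lam') < ξ) :
    L1 * lam' ^ 2 - L2 < lam' ^ 4 := by
  have hbound : 2 * (lam + lam') * lam' < ξ * (lam + 3 * lam') :=
    (div_lt_iff₀ (by linarith)).1 hξ
  have hpos := eval_sq_charpoly_psi_transpose_mul_psi_pos h1 h3 hbound
  rw [eval_charpoly_fin_two, trace_psi_transpose_mul_psi, det_psi_transpose_mul_psi,
    ← hL1, ← hL2] at hpos
  linarith
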